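/- (Pólya factorization) Let f_1, …, f_n : (a,b) → ℝ be n times continuously differentiable functions and, for k = 1,…,n, let W_k(t) denote the Wronskian determinant of f_1,…,f_k, i.e. the determinant of the k×k matrix whose (i,j) entry is f_j^{(i−1)}(t); set W_0 ≡ 1. Assume W_k(t) ≠ 0 for every k = 1,…,n and every t ∈ (a,b). Define the first-order differential operators D_k by (D_k g)(t) = (W_k(t)/W_{k−1}(t)) · d/dt [ (W_{k−1}(t)/W_k(t)) · g(t) ]. Then for every i = 1,…,n, the composition D_n D_{n−1} ⋯ D_2 D_1 applied to f_i is identically zero on (a,b); that is, f_1,…,f_n all satisfy the n-th order linear differential equation D_n D_{n−1} ⋯ D_1 y = 0. -/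

import Mathlib

/-- The Wronskian `W_k(t)` of the functions `f 1, …, f k` (the determinant of
the matrix of their derivatives of orders `0,…,k-1`); `W_0 ≡ 1`. -/
noncomputable def polyaW (f : ℕ → ℝ → ℝ) (k : ℕ) (t : ℝ) : ℝ :=
  Matrix.det (Matrix.of fun i j : Fin k => iteratedDeriv (i : ℕ) (f ((j : ℕ) + 1)) t)

/-- The first-order differential operator
`(D_k g)(t) = (W_k/W_{k-1})(t) · d/dt [ (W_{k-1}/W_k) · g ](t)`. -/
noncomputable def polyaD (f : ℕ → ℝ → ℝ) (k : ℕ) (g : ℝ → ℝ) : ℝ → ℝ :=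
  fun t => (polyaW f k t / polyaW f (k - 1) t) *
    deriv (fun s => (polyaW f (k - 1) s / polyaW f k s) * g s) t

/-- The composition `D_k D_{k-1} ⋯ D_1`. -/
noncomputable def polyaComp (f : ℕ → ℝ → ℝ) : ℕ → (ℝ → ℝ) → (ℝ → ℝ)
  | 0, g => g
  | k + 1, g => polyaD f (k + 1) (polyaComp f k g)

/-!
Pólya's identity `D_k ⋯ D_1 g = W(f_1, …, f_k, g) / W_k` holds for every `k`, and for `g = f_i`
with `i ≤ k` the Wronskian on the right has a repeated column. The identity follows by induction
on `k` from
`(W(v, g) / W(v, h))' = W(v) W(v, h, g) / W(v, h) ^ 2`.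
Since differentiating a Wronskian only raises the order of its last row, the quotient rule turns
this into the Desnanot–Jacobi identity for the Wronskian matrix of `(v, h, g)` and its last two
rows and columns. That identity holds because all the minors involved contain the same invertible
block `A`, so up to a power of `det A` it is the formula for a `2 × 2` determinant of entries of one
Schur complement.
-/

open Matrix

section Append

variable {X : Type*} {k : ℕ}

theorem append_val_singleton (u : ℕ → X) (k : ℕ) :
    Fin.append (fun j : Fin k => u j) ![u k] = fun j : Fin (k + 1) => u j := by
  ext j
  cases j using Fin.addCases <;> simp

theorem append_singleton_singleton (x : Fin k → X) (a b : X) :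
    Fin.append (Fin.append x ![a]) ![b] = Fin.append x ![a, b] := by
  ext j
  induction j using Fin.addCases with
  | left j =>
    induction j using Fin.addCases with
    | left j =>
      rw [Fin.append_left, Fin.append_left]
      exact (Fin.append_left x ![a, b] j).symm
    | right j =>
      obtain rfl := Fin.fin_one_eq_zero j
      rw [Fin.append_left, Fin.append_right]
      exact (Fin.append_right x ![a, b] 0).symm
  | right j =>
    obtain rfl := Fin.fin_one_eq_zero j
    rw [Fin.append_right]
    exact (Fin.append_right x ![a, b] 1).symm

end Append

section Determinant

variable {X Y R : Type*} [CommRing R] {k m : ℕ}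

theorem det_submatrix_append (K : Matrix X Y R) (x : Fin k → X) (y : Fin k → Y)
    [Invertible (K.submatrix x y)] (a : Fin m → X) (b : Fin m → Y) :
    (K.submatrix (Fin.append x a) (Fin.append y b)).det = (K.submatrix x y).det *
      ((K - K.submatrix id y * ⅟(K.submatrix x y) * K.submatrix x id).submatrix a b).det := by
  have blocks : (K.submatrix (Fin.append x a) (Fin.append y b)).submatrix
      finSumFinEquiv finSumFinEquiv = fromBlocks (K.submatrix x y) (K.submatrix x b)
        (K.submatrix a y) (K.submatrix a b) := by
    ext (i | i) (j | j) <;> simp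
  rw [← det_submatrix_equiv_self finSumFinEquiv, blocks, det_fromBlocks₁₁]
  rfl

theorem desnanot_jacobi (K : Matrix X Y R) {x : Fin k → X} {y : Fin k → Y}
    (hxy : IsUnit (K.submatrix x y).det) (a₁ a₂ : X) (b₁ b₂ : Y) :
    (K.submatrix x y).det *
        (K.submatrix (Fin.append x ![a₁, a₂]) (Fin.append y ![b₁, b₂])).det =
      (K.submatrix (Fin.append x ![a₁]) (Fin.append y ![b₁])).det *
        (K.submatrix (Fin.append x ![a₂]) (Fin.append y ![b₂])).det -
      (K.submatrix (Fin.append x ![a₁]) (Fin.append y ![b₂])).det *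
        (K.submatrix (Fin.append x ![a₂]) (Fin.append y ![b₁])).det := by
  have := invertibleOfIsUnitDet _ hxy
  simp only [det_submatrix_append, det_fin_two, det_unique, submatrix_apply, Fin.default_eq_zero,
    cons_val_zero, cons_val_one, cons_val_fin_one]
  ring

end Determinant

section Derivative

variable {𝕜 : Type*} [NontriviallyNormedField 𝕜] {k : ℕ} {t : 𝕜}

theorem differentiableOn_iteratedDeriv {F : Type*} [NormedAddCommGroup F] [NormedSpace 𝕜 F]
    {s : Set 𝕜} {g : 𝕜 → F} {n : WithTop ℕ∞} {m : ℕ} (hs : IsOpen s) (hg : ContDiffOn 𝕜 n g s)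
    (hmn : m < n) : DifferentiableOn 𝕜 (iteratedDeriv m g) s :=
  (hg.differentiableOn_iteratedDerivWithin hmn hs.uniqueDiffOn).congr
    fun _ hx => (iteratedDerivWithin_of_isOpen hs hx).symm

theorem hasDerivAt_det {ι : Type*} [Fintype ι] [DecidableEq ι] {M : 𝕜 → Matrix ι ι 𝕜}
    {M' : Matrix ι ι 𝕜} (hM : ∀ i j, HasDerivAt (fun s => M s i j) (M' i j) t) :
    HasDerivAt (fun s => (M s).det) (∑ i, ((M t).updateRow i (M' i)).det) t := by
  let D : ContinuousMultilinearMap 𝕜 (fun _ : ι => ι → 𝕜) 𝕜 :=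
    { toMultilinearMap := (detRowAlternating (R := 𝕜) (n := ι)).toMultilinearMap
      cont := continuous_id.matrix_det }
  have hrows : HasDerivAt (fun s i => M s i) (fun i => M' i) t :=
    hasDerivAt_pi.2 fun i => hasDerivAt_pi.2 (hM i)
  have hD := (D.hasFDerivAt (M t)).comp_hasDerivAt t hrows
  exact hD.congr_deriv (D.linearDeriv_apply (M t) fun i => M' i)

/-- The infinite matrix with entry `g⁽ⁱ⁾(t)` in row `i` and column `g`. Its rows and columns are
indexed by all orders and all functions, so that Wronskians and their derivatives are all minors of
this one matrix. -/
noncomputable def jetMatrix (t : 𝕜) : Matrix ℕ (𝕜 → 𝕜) 𝕜 :=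
  of fun i g => iteratedDeriv i g t

/-- The Wronskian determinant of a finite family of functions, as a minor of `jetMatrix` on the
rows `0, …, k - 1`. -/
noncomputable def wronskian (f : Fin k → 𝕜 → 𝕜) (t : 𝕜) : 𝕜 :=
  ((jetMatrix t).submatrix Fin.val f).det

theorem wronskian_fin_one (f : Fin 1 → 𝕜 → 𝕜) (t : 𝕜) : wronskian f t = f 0 t := by
  simp [wronskian, jetMatrix]

theorem wronskian_eq_zero_of_eq {f : Fin k → 𝕜 → 𝕜} {i j : Fin k} (hij : i ≠ j) (h : f i = f j)
    (t : 𝕜) : wronskian f t = 0 :=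
  det_zero_of_column_eq hij fun l => by simp only [submatrix_apply, h]

theorem hasDerivAt_wronskian {f : Fin (k + 1) → 𝕜 → 𝕜}
    (hf : ∀ i ≤ k, ∀ j, DifferentiableAt 𝕜 (iteratedDeriv i (f j)) t) :
    HasDerivAt (wronskian f)
      ((jetMatrix t).submatrix (Fin.append (Fin.val : Fin k → ℕ) ![k + 1]) f).det t := by
  have hentry (i j : Fin (k + 1)) : HasDerivAt (fun s => (jetMatrix s).submatrix Fin.val f i j)
      ((jetMatrix t).submatrix (fun i : Fin (k + 1) => (i : ℕ) + 1) f i j) t := by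
    simpa only [jetMatrix, submatrix_apply, of_apply, iteratedDeriv_succ]
      using (hf i i.is_le j).hasDerivAt
  convert! hasDerivAt_det hentry using 1
  rw [Fin.sum_univ_castSucc, Finset.sum_eq_zero, zero_add]
  · congr 1
    ext i j
    have hlast : Fin.append (Fin.val : Fin k → ℕ) ![k + 1] (Fin.last k) = k + 1 :=
      Fin.append_right _ _ 0
    have hcast (i : Fin k) : Fin.append (Fin.val : Fin k → ℕ) ![k + 1] i.castSucc = i :=
      Fin.append_left _ _ i
    cases i using Fin.lastCases <;> simp [updateRow_apply, hlast, hcast]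
  · intro i _
    -- Differentiating row `i < k` turns it into a copy of row `i + 1`.
    refine det_zero_of_row_eq (Fin.castSucc_lt_succ (i := i)).ne ?_
    ext j
    simp [updateRow_apply]

theorem hasDerivAt_wronskian_append_div {v : Fin k → 𝕜 → 𝕜} {g h : 𝕜 → 𝕜}
    (hv : ∀ i ≤ k, ∀ j, DifferentiableAt 𝕜 (iteratedDeriv i (v j)) t)
    (hg : ∀ i ≤ k, DifferentiableAt 𝕜 (iteratedDeriv i g) t)
    (hh : ∀ i ≤ k, DifferentiableAt 𝕜 (iteratedDeriv i h) t)
    (hWv : wronskian v t ≠ 0) (hWh : wronskian (Fin.append v ![h]) t ≠ 0) :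
    HasDerivAt (fun s => wronskian (Fin.append v ![g]) s / wronskian (Fin.append v ![h]) s)
      (wronskian v t * wronskian (Fin.append v ![h, g]) t /
        wronskian (Fin.append v ![h]) t ^ 2) t := by
  have happend {u : 𝕜 → 𝕜} (hu : ∀ i ≤ k, DifferentiableAt 𝕜 (iteratedDeriv i u) t) :
      ∀ i ≤ k, ∀ j, DifferentiableAt 𝕜 (iteratedDeriv i (Fin.append v ![u] j)) t := by
    intro i hi j
    cases j using Fin.addCases with
    | left j => simpa only [Fin.append_left] using hv i hi j
    | right j => simpa using hu i hi
  have hval (k : ℕ) : Fin.append (Fin.val : Fin k → ℕ) ![k] = Fin.val :=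
    append_val_singleton id k
  let W (u : 𝕜 → 𝕜) : 𝕜 := wronskian (Fin.append v ![u]) t
  let W' (u : 𝕜 → 𝕜) : 𝕜 :=
    ((jetMatrix t).submatrix (Fin.append Fin.val ![k + 1]) (Fin.append v ![u])).det
  have jacobi : wronskian v t * wronskian (Fin.append v ![h, g]) t = W h * W' g - W g * W' h := by
    have := desnanot_jacobi (jetMatrix t) hWv.isUnit k (k + 1) h g
    rw [← append_singleton_singleton Fin.val, hval, hval] at this
    exact this
  rw [jacobi, mul_comm (W h)]
  exact (hasDerivAt_wronskian (happend hg)).div (hasDerivAt_wronskian (happend hh)) hWh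

end Derivative

section Polya

variable {f : ℕ → ℝ → ℝ} {n k : ℕ} {s : Set ℝ}

theorem polyaW_eq_wronskian (f : ℕ → ℝ → ℝ) (k : ℕ) :
    polyaW f k = wronskian fun j : Fin k => f (j + 1) :=
  rfl

theorem polyaW_zero (f : ℕ → ℝ → ℝ) (t : ℝ) : polyaW f 0 t = 1 :=
  det_isEmpty

theorem polyaComp_eq_wronskian_div (hs : IsOpen s)
    (hf : ∀ j, 1 ≤ j → j ≤ n → ∀ m < n, DifferentiableOn ℝ (iteratedDeriv m (f j)) s)
    (hW : ∀ k ≤ n, ∀ t ∈ s, polyaW f k t ≠ 0) {g : ℝ → ℝ}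
    (hg : ∀ m < n, DifferentiableOn ℝ (iteratedDeriv m g) s) (hk : k ≤ n) {t : ℝ} (ht : t ∈ s) :
    polyaComp f k g t =
      wronskian (Fin.append (fun j : Fin k => f (j + 1)) ![g]) t / polyaW f k t := by
  induction k generalizing t with
  | zero =>
    rw [polyaW_zero, div_one]
    exact (wronskian_fin_one (Fin.append (fun j : Fin 0 => f (j + 1)) ![g]) t).symm
  | succ k ih =>
    let v : Fin k → ℝ → ℝ := fun j => f (j + 1)
    have hv : Fin.append v ![f (k + 1)] = fun j : Fin (k + 1) => f (j + 1) :=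
      append_val_singleton (fun j => f (j + 1)) k
    have hst := hs.mem_nhds ht
    have hquot := hasDerivAt_wronskian_append_div (t := t) (v := v) (g := g) (h := f (k + 1))
      (fun i hi j => (hf _ (by omega) (by omega) i (by omega)).differentiableAt hst)
      (fun i hi => (hg i (by omega)).differentiableAt hst)
      (fun i hi => (hf _ (by omega) hk i (by omega)).differentiableAt hst)
      (hW k (by omega) t ht) (by rw [hv]; exact hW _ hk t ht)
    have hev : (fun r => polyaW f k r / polyaW f (k + 1) r * polyaComp f k g r) =ᶠ[nhds t]
        fun r => wronskian (Fin.append v ![g]) r / wronskian (Fin.append v ![f (k + 1)]) r := by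
      filter_upwards [hst] with r hr
      rw [ih (by omega) hr, hv, ← polyaW_eq_wronskian, mul_comm,
        div_mul_div_cancel₀ (hW k (by omega) r hr)]
    simp only [polyaComp, polyaD, Nat.add_sub_cancel]
    rw [hev.deriv_eq, hquot.deriv, ← append_singleton_singleton, hv, ← polyaW_eq_wronskian,
      ← polyaW_eq_wronskian]
    field_simp [hW k (by omega) t ht, hW _ hk t ht]

theorem stmt19_general (hs : IsOpen s)
    (hf : ∀ j, 1 ≤ j → j ≤ n → ∀ m < n, DifferentiableOn ℝ (iteratedDeriv m (f j)) s)
    (hW : ∀ k, 1 ≤ k → k ≤ n → ∀ t ∈ s, polyaW f k t ≠ 0) {i : ℕ} (hi₁ : 1 ≤ i) (hin : i ≤ n)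
    {t : ℝ} (ht : t ∈ s) : polyaComp f n (f i) t = 0 := by
  have hW₀ : ∀ k ≤ n, ∀ t ∈ s, polyaW f k t ≠ 0 := by
    rintro (_ | k) hk t ht
    · simp [polyaW_zero]
    · exact hW _ (by omega) hk t ht
  obtain ⟨i, rfl⟩ := Nat.exists_eq_add_of_le' hi₁
  rw [polyaComp_eq_wronskian_div hs hf hW₀ (hf _ hi₁ hin) le_rfl ht]
  have hne : Fin.castAdd 1 (⟨i, hin⟩ : Fin n) ≠ Fin.natAdd n 0 := (Fin.castSucc_lt_last _).ne
  rw [wronskian_eq_zero_of_eq hne, zero_div]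
  rw [Fin.append_left, Fin.append_right, cons_val_zero]

end Polya

/-- **Pólya's factorization.** If the Wronskians `W_1, …, W_n` of
`f 1, …, f n ∈ Cⁿ(a,b)` are nonvanishing on `(a,b)`, then each `f i`
(`1 ≤ i ≤ n`) is annihilated by the composition `D_n D_{n-1} ⋯ D_1`. -/
theorem stmt19 (n : ℕ) (a b : ℝ) (f : ℕ → ℝ → ℝ)
    (hf : ∀ j, 1 ≤ j → j ≤ n → ContDiffOn ℝ n (f j) (Set.Ioo a b))
    (hW : ∀ k, 1 ≤ k → k ≤ n → ∀ t ∈ Set.Ioo a b, polyaW f k t ≠ 0) :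
    ∀ i, 1 ≤ i → i ≤ n → ∀ t ∈ Set.Ioo a b, polyaComp f n (f i) t = 0 := fun _ hi₁ hin _ ht =>
  stmt19_general isOpen_Ioo (fun j hj₁ hjn _ hm =>
    differentiableOn_iteratedDeriv isOpen_Ioo (hf j hj₁ hjn) (mod_cast hm)) hW hi₁ hin ht
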